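/- Let A be an open subset of ℂ⁴ (complex coordinates (z₀,z₁,z₂,z₃)) and let μ : A → ℂ be holomorphic, satisfying on A the equations ∂_{q̃₁}μ − μ·∂_{q₂}μ = 0 and ∂_{q̃₂}μ + μ·∂_{q₁}μ = 0, where ∂_{q₁} = ½(∂_{z₀} − i∂_{z₁}), ∂_{q̃₁} = ½(∂_{z₀} + i∂_{z₁}), ∂_{q₂} = ½(∂_{z₂} − i∂_{z₃}), ∂_{q̃₂} = ½(∂_{z₂} + i∂_{z₃}). Then on A: ∑ᵢ₌₀³ ∂²μ/∂zᵢ² = 0 and ∑ᵢ₌₀³ (∂μ/∂zᵢ)² = 0; that is, μ is a complex-harmonic morphism. -/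

import Mathlib

noncomputable section

/-- Complex partial derivative in the `i`-th coordinate direction of a map `ℂ⁴ → ℂ`. -/
def pdC (i : Fin 4) (f : (Fin 4 → ℂ) → ℂ) (z : Fin 4 → ℂ) : ℂ :=
  fderiv ℂ f z (Pi.single i 1)

open Metric Set Filter Topology in
theorem pdC_differentiableAt_aux (A : Set (Fin 4 → ℂ)) (hA : IsOpen A)
    (μ : (Fin 4 → ℂ) → ℂ) (hμ : DifferentiableOn ℂ μ A) (v : Fin 4 → ℂ) (hv : ‖v‖ ≤ 1)
    (z₀ : Fin 4 → ℂ) (hz₀ : z₀ ∈ A) :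
    DifferentiableAt ℂ (fun z => fderiv ℂ μ z v) z₀ := by
  have hc : ContinuousAt μ z₀ := (hμ.differentiableAt (hA.mem_nhds hz₀)).continuousAt
  have hev : ∀ᶠ z in 𝓝 z₀, z ∈ A ∧ μ z ∈ ball (μ z₀) 1 :=
    Filter.Eventually.and (hA.mem_nhds hz₀) (hc.eventually_mem (ball_mem_nhds _ one_pos))
  obtain ⟨ε, hε, hball⟩ := Metric.eventually_nhds_iff_ball.1 hev
  obtain ⟨r, hr, hrε⟩ : ∃ r : ℝ, 0 < r ∧ ε = 4 * r := ⟨ε / 4, by positivity, by ring⟩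
  have hd : ∀ z ∈ ball z₀ ε, DifferentiableAt ℂ μ z := fun z hz =>
    hμ.differentiableAt (hA.mem_nhds (hball z hz).1)
  have hbd : ∀ w ∈ ball z₀ (3 * r), ‖fderiv ℂ μ w‖ ≤ 2 / r := by
    intro w hw
    have hsub : ball w r ⊆ ball z₀ ε := ball_subset_ball' (by
      rw [mem_ball] at hw; linarith)
    refine Complex.norm_fderiv_le_div_of_mapsTo_ball
      (fun z hz => (hd z (hsub hz)).differentiableWithinAt) ?_ hr
    intro z hz
    have h1 := (hball z (hsub hz)).2
    have h2 := (hball w (hsub (mem_ball_self hr))).2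
    rw [mem_ball] at h1 h2
    rw [mem_closedBall]
    have := dist_triangle_right (μ z) (μ w) (μ z₀)
    linarith
  have hmem : ∀ z ∈ ball z₀ r, ∀ t ∈ closedBall (0 : ℂ) r, z + t • v ∈ ball z₀ (3 * r) := by
    intro z hz t ht
    rw [mem_ball, dist_eq_norm] at hz ⊢
    rw [mem_closedBall, dist_zero_right] at ht
    have h1 : ‖t • v‖ ≤ r := by
      rw [norm_smul]
      calc ‖t‖ * ‖v‖ ≤ r * 1 := by gcongr
        _ = r := mul_one r
    have h2 : z + t • v - z₀ = (z - z₀) + t • v := by abel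
    rw [h2]
    have := norm_add_le (z - z₀) (t • v)
    linarith
  have h3 : ball z₀ (3 * r) ⊆ ball z₀ ε := ball_subset_ball (by linarith)
  have hcirc : ∀ θ : ℝ, circleMap 0 r θ ∈ closedBall (0 : ℂ) r := fun θ =>
    circleMap_mem_closedBall 0 hr.le θ
  set c : ℝ → ℂ := fun θ => deriv (circleMap 0 r) θ * (1 / (circleMap 0 r θ - 0) ^ 2) with hcdef
  have hcc : Continuous c := by
    have hne : ∀ θ : ℝ, (circleMap 0 r θ - 0) ^ 2 ≠ 0 := fun θ => by
      have := circleMap_ne_center (c := 0) (θ := θ) hr.ne'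
      simpa using this
    have h1 : Continuous (circleMap 0 r) := continuous_circleMap 0 r
    simp only [hcdef, deriv_circleMap]
    exact (h1.mul continuous_const).mul
      (continuous_const.div ((h1.sub continuous_const).pow 2) hne)
  have hform : ∀ z ∈ ball z₀ r, fderiv ℂ μ z v =
      (2 * Real.pi * Complex.I)⁻¹ *
        ∫ θ in (0 : ℝ)..2 * Real.pi, c θ * μ (z + circleMap 0 r θ • v) := by
    intro z hz
    have hline : ∀ t : ℂ, HasDerivAt (fun t : ℂ => z + t • v) v t := fun t => by
      simpa using ((hasDerivAt_id t).smul_const v).const_add z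
    have hder : ∀ t ∈ closedBall (0 : ℂ) r,
        HasDerivAt (fun t : ℂ => μ (z + t • v)) (fderiv ℂ μ (z + t • v) v) t := fun t ht =>
      (hd _ (h3 (hmem z hz t ht))).hasFDerivAt.comp_hasDerivAt t (hline t)
    have hdc : DiffContOnCl ℂ (fun t : ℂ => μ (z + t • v)) (ball 0 r) :=
      DifferentiableOn.diffContOnCl (fun t ht =>
        (hder t (closure_ball_subset_closedBall ht)).differentiableAt.differentiableWithinAt)
    have h := hdc.deriv_eq_smul_circleIntegral hr
    have h0 := (hder 0 (mem_closedBall_self hr.le)).deriv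
    rw [zero_smul, add_zero] at h0
    rw [h0, circleIntegral] at h
    have h2 : (2 * Real.pi * Complex.I : ℂ) ≠ 0 := Complex.two_pi_I_ne_zero
    rw [eq_inv_mul_iff_mul_eq₀ h2]
    simp only [smul_eq_mul] at h
    rw [← h]
    simp only [hcdef, mul_assoc]
  have hcontF : ∀ z ∈ ball z₀ r, Continuous (fun θ : ℝ => c θ * μ (z + circleMap 0 r θ • v)) := by
    intro z hz
    refine hcc.mul (continuous_iff_continuousAt.2 fun θ => ?_)
    exact ContinuousAt.comp (f := fun θ : ℝ => z + circleMap 0 r θ • v)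
      (hd _ (h3 (hmem z hz _ (hcirc θ)))).continuousAt
      (continuous_const.add ((continuous_circleMap 0 r).smul continuous_const)).continuousAt
  have key := intervalIntegral.hasFDerivAt_integral_of_dominated_of_fderiv_le
    (μ := MeasureTheory.volume) (𝕜 := ℂ) (a := 0) (b := 2 * Real.pi) (x₀ := z₀)
    (s := ball z₀ r) (bound := fun θ => ‖c θ‖ * (2 / r))
    (F := fun z θ => c θ * μ (z + circleMap 0 r θ • v))
    (F' := fun z θ => c θ • fderiv ℂ μ (z + circleMap 0 r θ • v))
    (ball_mem_nhds _ hr)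
    (by
      filter_upwards [ball_mem_nhds z₀ hr] with z hz
      exact (hcontF z hz).aestronglyMeasurable)
    ((hcontF z₀ (mem_ball_self hr)).intervalIntegrable _ _)
    (by
      refine hcc.aestronglyMeasurable.smul ?_
      have hm : Measurable (fun θ : ℝ => fderiv ℂ μ (z₀ + circleMap 0 r θ • v)) :=
        (measurable_fderiv ℂ μ).comp
          (continuous_const.add ((continuous_circleMap 0 r).smul continuous_const)).measurable
      exact hm.aestronglyMeasurable)
    (Eventually.of_forall fun θ _ z hz => by
      rw [norm_smul]
      gcongr
      exact hbd _ (hmem z hz _ (hcirc θ)))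
    ((hcc.norm.mul continuous_const).intervalIntegrable _ _)
    (Eventually.of_forall fun θ _ z hz => by
      have h1 : HasFDerivAt (fun x => μ (x + circleMap 0 r θ • v))
          (fderiv ℂ μ (z + circleMap 0 r θ • v)) z :=
        (hasFDerivAt_comp_add_right _).2 (hd _ (h3 (hmem z hz _ (hcirc θ)))).hasFDerivAt
      exact h1.const_mul (c θ))
  refine (key.differentiableAt.const_mul (2 * Real.pi * Complex.I : ℂ)⁻¹).congr_of_eventuallyEq ?_
  filter_upwards [ball_mem_nhds z₀ hr] with z hz using hform z hz

theorem pdC_symm_aux (A : Set (Fin 4 → ℂ)) (hA : IsOpen A)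
    (μ : (Fin 4 → ℂ) → ℂ) (hμ : DifferentiableOn ℂ μ A) (z : Fin 4 → ℂ) (hz : z ∈ A)
    (hd : ∀ i, DifferentiableAt ℂ (pdC i μ) z) (i j : Fin 4) :
    pdC i (pdC j μ) z = pdC j (pdC i μ) z := by
  have hD : DifferentiableAt ℂ (fderiv ℂ μ) z := by
    have hrep : fderiv ℂ μ = fun w => ∑ i : Fin 4,
        (pdC i μ w) • (ContinuousLinearMap.proj i : (Fin 4 → ℂ) →L[ℂ] ℂ) := by
      funext w
      refine ContinuousLinearMap.ext fun x => ?_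
      have hx : x = ∑ i : Fin 4, x i • (Pi.single i (1 : ℂ) : Fin 4 → ℂ) := pi_eq_sum_univ' x
      conv_lhs => rw [hx]
      simp [pdC, mul_comm]
    rw [hrep]
    exact DifferentiableAt.fun_sum fun i _ => (hd i).smul_const _
  have hs := second_derivative_symmetric_of_eventually (𝕜 := ℂ) (f := μ) (f' := fderiv ℂ μ)
    (f'' := fderiv ℂ (fderiv ℂ μ) z) (x := z)
    (by
      filter_upwards [hA.mem_nhds hz] with w hw
      exact (hμ.differentiableAt (hA.mem_nhds hw)).hasFDerivAt) hD.hasFDerivAt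
  have hp : ∀ i j, pdC i (pdC j μ) z =
      fderiv ℂ (fderiv ℂ μ) z (Pi.single i 1) (Pi.single j 1) := by
    intro i j
    have h1 : HasFDerivAt (pdC j μ)
        ((fderiv ℂ (fderiv ℂ μ) z).flip (Pi.single j 1)) z := by
      have := hD.hasFDerivAt.clm_apply (hasFDerivAt_const (Pi.single j (1 : ℂ) : Fin 4 → ℂ) z)
      rw [ContinuousLinearMap.comp_zero, zero_add] at this
      exact this
    rw [pdC, h1.fderiv]
    rfl
  rw [hp, hp, hs]

/-- Proposition 7.2: a holomorphic map `μ` on an open subset of `ℂ⁴` satisfying the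
`α`-plane integrability equations `∂_{q̃₁}μ − μ ∂_{q₂}μ = 0` and `∂_{q̃₂}μ + μ ∂_{q₁}μ = 0`
(with `∂_{q₁} = ½(∂_{z₀} − i∂_{z₁})`, `∂_{q̃₁} = ½(∂_{z₀} + i∂_{z₁})`, etc.)
is a complex-harmonic morphism: `∑ᵢ ∂²μ/∂zᵢ² = 0` and `∑ᵢ (∂μ/∂zᵢ)² = 0`. -/
theorem alpha_plane_representative_is_complex_harmonic_morphism
    (A : Set (Fin 4 → ℂ)) (hA : IsOpen A)
    (μ : (Fin 4 → ℂ) → ℂ) (hμ : DifferentiableOn ℂ μ A)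
    (heq1 : ∀ z ∈ A,
      (pdC 0 μ z + Complex.I * pdC 1 μ z) / 2
        - μ z * ((pdC 2 μ z - Complex.I * pdC 3 μ z) / 2) = 0)
    (heq2 : ∀ z ∈ A,
      (pdC 2 μ z + Complex.I * pdC 3 μ z) / 2
        + μ z * ((pdC 0 μ z - Complex.I * pdC 1 μ z) / 2) = 0) :
    ∀ z ∈ A,
      (∑ i : Fin 4, pdC i (pdC i μ) z = 0) ∧
      (∑ i : Fin 4, (pdC i μ z) ^ 2 = 0) := by
  intro z hz
  have hn : ∀ i : Fin 4, ‖(Pi.single i 1 : Fin 4 → ℂ)‖ ≤ 1 := fun i => by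
    rw [Pi.norm_single, norm_one]
  have hd : ∀ w ∈ A, ∀ i, DifferentiableAt ℂ (pdC i μ) w := fun w hw i =>
    pdC_differentiableAt_aux A hA μ hμ (Pi.single i 1) (hn i) w hw
  have hμz : DifferentiableAt ℂ μ z := hμ.differentiableAt (hA.mem_nhds hz)
  have hsym := pdC_symm_aux A hA μ hμ z hz (hd z hz)
  have hI : Complex.I ^ 2 = -1 := Complex.I_sq
  -- differentiate the two equations in each coordinate direction
  have hD : ∀ i, HasFDerivAt (pdC i μ) (fderiv ℂ (pdC i μ) z) z :=
    fun i => (hd z hz i).hasFDerivAt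
  have e1 : ∀ k, (pdC k (pdC 0 μ) z + Complex.I * pdC k (pdC 1 μ) z)
      - (pdC k μ z * (pdC 2 μ z - Complex.I * pdC 3 μ z)
        + μ z * (pdC k (pdC 2 μ) z - Complex.I * pdC k (pdC 3 μ) z)) = 0 := by
    intro k
    have h := ((hD 0).add ((hD 1).const_mul Complex.I)).sub
      (hμz.hasFDerivAt.mul ((hD 2).sub ((hD 3).const_mul Complex.I)))
    have h0 := h.congr_of_eventuallyEq (f₁ := fun _ => (0 : ℂ)) (by
      filter_upwards [hA.mem_nhds hz] with w hw
      have := heq1 w hw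
      simp only [Pi.add_apply, Pi.sub_apply, Pi.mul_apply]
      linear_combination (-2) * this)
    have h1 := congrArg (fun L => L (Pi.single k 1)) (h0.unique (hasFDerivAt_const (0 : ℂ) z))
    simp only [pdC] at h1 ⊢
    simp [pdC] at h1
    linear_combination h1
  have e2 : ∀ k, (pdC k (pdC 2 μ) z + Complex.I * pdC k (pdC 3 μ) z)
      + (pdC k μ z * (pdC 0 μ z - Complex.I * pdC 1 μ z)
        + μ z * (pdC k (pdC 0 μ) z - Complex.I * pdC k (pdC 1 μ) z)) = 0 := by
    intro k
    have h := ((hD 2).add ((hD 3).const_mul Complex.I)).add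
      (hμz.hasFDerivAt.mul ((hD 0).sub ((hD 1).const_mul Complex.I)))
    have h0 := h.congr_of_eventuallyEq (f₁ := fun _ => (0 : ℂ)) (by
      filter_upwards [hA.mem_nhds hz] with w hw
      have := heq2 w hw
      simp only [Pi.add_apply, Pi.sub_apply, Pi.mul_apply]
      linear_combination (-2) * this)
    have h1 := congrArg (fun L => L (Pi.single k 1)) (h0.unique (hasFDerivAt_const (0 : ℂ) z))
    simp only [pdC] at h1 ⊢
    simp [pdC] at h1
    linear_combination h1
  have q1 := heq1 z hz
  have q2 := heq2 z hz
  simp only [Fin.sum_univ_four]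
  constructor
  · have a0 := e1 0
    have a1 := e1 1
    have b2 := e2 2
    have b3 := e2 3
    rw [hsym 1 0] at a1
    rw [hsym 2 0, hsym 2 1] at b2
    rw [hsym 3 2, hsym 3 0, hsym 3 1] at b3
    linear_combination a0 - Complex.I * a1 + b2 - Complex.I * b3
      + (pdC 1 (pdC 1 μ) z + pdC 3 (pdC 3 μ) z) * hI
  · linear_combination (2 * (pdC 0 μ z - Complex.I * pdC 1 μ z)) * q1
      + (2 * (pdC 2 μ z - Complex.I * pdC 3 μ z)) * q2
      + ((pdC 1 μ z) ^ 2 + (pdC 3 μ z) ^ 2) * hI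

end
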